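/- Let f : ℕ → ℝ be the function computed by a black box trained for language modelling over a one-letter alphabet, i.e. f(m) ≥ 0 for all m and Σ_{m≥0} f(m) = 1, let H = H_f, and for n ∈ ℕ let H^n = H_{f^n} be the truncated Hankel operator, where f^n(m) = f(m) for m ≤ n and f^n(m) = 0 for m > n. Let N be a bounded linear operator on ℓ²(ℕ) (a Hankel noise operator), let k < n, and let G̃ be a bounded linear operator on ℓ²(ℕ) whose range has dimension at most k and which satisfies ‖(H^n + N) − G̃‖ = σ_k(H^n + N) (the optimal rank-k approximation of the perturbed truncation, which exists by the AAK theorem). Then ‖H − G̃‖ ≤ σ_k(H) + 2‖H − H^n‖ + 2‖N‖. -/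

import Mathlib

/-!
The approximation numbers are 1-Lipschitz for the operator norm (`approxNum_le_add`): any rank-`k`
competitor for `S` is also a competitor for `T`, at a cost of at most `‖T - S‖`. Writing
`E = (H - Hn) - N = H - (Hn + N)`, optimality of `G` gives
`‖H - G‖ ≤ ‖E‖ + σ_k(Hn + N) ≤ σ_k(H) + 2‖E‖`, and `‖E‖ ≤ ‖H - Hn‖ + ‖N‖`.
-/

/-- `L2` is the Hilbert space `ℓ²(ℕ)` of square-summable real sequences. -/
noncomputable abbrev L2 : Type := lp (fun _ : ℕ => ℝ) 2

/-- `IsHankelOp f T` says that the bounded linear operator `T` on `ℓ²(ℕ)` is the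
Hankel operator associated with `f : ℕ → ℝ`, i.e. for every `x ∈ ℓ²(ℕ)` and every
`i ∈ ℕ` the series `Σ_{j≥0} f(i+j)·x(j)` converges and equals `(T x)(i)`. -/
def IsHankelOp (f : ℕ → ℝ) (T : L2 →L[ℝ] L2) : Prop :=
  ∀ x : L2, ∀ i : ℕ, HasSum (fun j : ℕ => f (i + j) * x j) (T x i)

/-- The truncation `f^n` of `f` : `f^n(m) = f(m)` for `m ≤ n` and `0` otherwise. -/
def trunc (f : ℕ → ℝ) (n : ℕ) : ℕ → ℝ := fun m => if m ≤ n then f m else 0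

/-- The `k`-th approximation number of a bounded linear operator `T` on `ℓ²(ℕ)`:
`σ_k(T) = inf { ‖T − F‖ : F bounded linear with range of dimension at most k }`. -/
noncomputable def approxNum (T : L2 →L[ℝ] L2) (k : ℕ) : ℝ :=
  sInf { r : ℝ | ∃ F : L2 →L[ℝ] L2,
    Module.rank ℝ (LinearMap.range (F : L2 →ₗ[ℝ] L2)) ≤ k ∧ r = ‖T - F‖ }

/-- Lipschitz dependence of the approximation numbers on the operator. -/
theorem approxNum_le_add (T S : L2 →L[ℝ] L2) (k : ℕ) :
    approxNum T k ≤ approxNum S k + ‖T - S‖ := by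
  rw [← sub_le_iff_le_add]
  -- The zero operator is a competitor, so the infimum is over a nonempty set.
  refine le_csInf ⟨‖S - 0‖, 0, ?_, rfl⟩ ?_
  · simp
  · rintro r ⟨F, hF, rfl⟩
    have h1 : approxNum T k ≤ ‖T - F‖ :=
      csInf_le ⟨0, by rintro _ ⟨F', -, rfl⟩; exact norm_nonneg _⟩ ⟨F, hF, rfl⟩
    have h2 := norm_sub_le_norm_sub_add_norm_sub T S F
    linarith

/-- let `f` be a probability distribution on `ℕ` with Hankel operator
`H`, let `H^n` be the Hankel operator of the truncation `f^n`, let `N` be a bounded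
(noise) operator, let `k < n`, and let `G̃` be an operator of rank at most `k` which
is an optimal rank-`k` approximation of the perturbed truncation `H^n + N`, i.e.
`‖(H^n + N) − G̃‖ = σ_k(H^n + N)`. Then
`‖H − G̃‖ ≤ σ_k(H) + 2‖H − H^n‖ + 2‖N‖`. -/
theorem noisy_approximation_bound (f : ℕ → ℝ)
    (hf_nonneg : ∀ m, 0 ≤ f m) (hf_sum : HasSum f 1)
    (n k : ℕ) (hkn : k < n) (H Hn N : L2 →L[ℝ] L2)
    (hH : IsHankelOp f H) (hHn : IsHankelOp (trunc f n) Hn)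
    (G : L2 →L[ℝ] L2)
    (hG_rank : Module.rank ℝ (LinearMap.range (G : L2 →ₗ[ℝ] L2)) ≤ k)
    (hG_opt : ‖(Hn + N) - G‖ = approxNum (Hn + N) k) :
    ‖H - G‖ ≤ approxNum H k + 2 * ‖H - Hn‖ + 2 * ‖N‖ := by
  have h1 := norm_sub_le_norm_sub_add_norm_sub H (Hn + N) G
  have h2 := approxNum_le_add (Hn + N) H k
  rw [norm_sub_rev] at h2
  have h3 : ‖H - (Hn + N)‖ ≤ ‖H - Hn‖ + ‖N‖ := by
    rw [← sub_sub]
    exact norm_sub_le _ _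
  linarith
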